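/- arXiv:1902.07871 — 2 statements merged into one kernel-verified Lean document; each statement's English description precedes it below -/
import Mathlib

section
/- There exists an ML absolutely continuous Borel probability measure μ on 2^ℕ such that for every θ ∈ (0,1) there is a constant c_θ with K(μ↾n) ≤ n − n^θ + c_θ for all n. -/
open MeasureTheory Filter

/-- Cantor space: the space of infinite binary sequences. -/
abbrev Cantor : Type := ℕ → Bool

/-- Finite binary strings. -/
abbrev BStr : Type := List Bool

/-- The cylinder set of sequences extending the string `x`. -/
def cyl (x : BStr) : Set Cantor := {Z | ∀ i : Fin x.length, Z i.1 = x.get i}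

/-- The string of the first `n` bits of `Z`. -/
def seg (Z : Cantor) (n : ℕ) : BStr := List.ofFn fun i : Fin n => Z i.1

/-- `lam` is the uniform (fair-coin product) measure: every cylinder `[x]`
has measure `2^{-|x|}`. -/
def IsUniform (lam : Measure Cantor) : Prop :=
  ∀ x : BStr, lam (cyl x) = (2 : ENNReal)⁻¹ ^ x.length

/-- `(G_m)` is a Martin-Löf test with respect to the measure `ρ`:
the sets `G_m` are uniformly effectively open and `ρ (G_m) ≤ 2^{-m}`. -/
def IsMLTest (ρ : Measure Cantor) (G : ℕ → Set Cantor) : Prop :=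
  (∃ σ : ℕ → ℕ → BStr, Computable₂ σ ∧ ∀ m, G m = ⋃ i, cyl (σ m i)) ∧
  ∀ m, ρ (G m) ≤ (2 : ENNReal)⁻¹ ^ m

/-- `μ` is Martin-Löf absolutely continuous in `ρ`: `inf_m μ(G_m) = 0`
for every `ρ`-Martin-Löf test `(G_m)`. -/
def MLAC (μ ρ : Measure Cantor) : Prop :=
  ∀ G : ℕ → Set Cantor, IsMLTest ρ G → ⨅ m, μ (G m) = 0

/-- `Z` is Martin-Löf random with respect to `lam`. -/
def MLRandom (lam : Measure Cantor) (Z : Cantor) : Prop :=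
  ∀ G : ℕ → Set Cantor, IsMLTest lam G → Z ∉ ⋂ m, G m

/-- `ρ` is a computable measure: `ρ [x]` is a computable real, uniformly in `x`. -/
def ComputableMeasure (ρ : Measure Cantor) : Prop :=
  ∃ q : BStr → ℕ → ℚ, Computable₂ q ∧
    ∀ x k, |(q x k : ℝ) - (ρ (cyl x)).toReal| ≤ (2 : ℝ)⁻¹ ^ k

/-- `U` is a universal plain machine. -/
def UniversalPlain (U : BStr →. BStr) : Prop :=
  Partrec U ∧ ∀ M : BStr →. BStr, Partrec M →
    ∃ c : ℕ, ∀ p x, x ∈ M p → ∃ q : BStr, q.length ≤ p.length + c ∧ x ∈ U q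

/-- The domain of `M` is an antichain under the prefix relation. -/
def PrefixFreeDom (M : BStr →. BStr) : Prop :=
  ∀ p q : BStr, (M p).Dom → (M q).Dom → p <+: q → p = q

/-- `U` is a universal prefix-free machine. -/
def UniversalPrefixFree (U : BStr →. BStr) : Prop :=
  Partrec U ∧ PrefixFreeDom U ∧
  ∀ M : BStr →. BStr, Partrec M → PrefixFreeDom M →
    ∃ c : ℕ, ∀ p x, x ∈ M p → ∃ q : BStr, q.length ≤ p.length + c ∧ x ∈ U q

/-- Kolmogorov complexity of the string `x` with respect to the machine `U`:
the minimal length of a `U`-description of `x`. -/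
noncomputable def cpx (U : BStr →. BStr) (x : BStr) : ℕ :=
  sInf {n | ∃ q : BStr, q.length = n ∧ x ∈ U q}

/-- A natural number `n` identified with the string `0^n`. -/
def numStr (n : ℕ) : BStr := List.replicate n false

/-- Complexity of the natural number `n` (i.e., of the string `0^n`). -/
noncomputable def cpxN (U : BStr →. BStr) (n : ℕ) : ℕ := cpx U (numStr n)

/-- The `μ`-average complexity of the strings of length `n`:
`Σ_{|x|=n} cpx(x) · μ[x]`. -/
noncomputable def avgCpx (U : BStr →. BStr) (μ : Measure Cantor) (n : ℕ) : ℝ :=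
  ∑ v : Fin n → Bool, (cpx U (List.ofFn v) : ℝ) * (μ (cyl (List.ofFn v))).toReal

/-- A measure `μ` is trivial for the complexity given by the machine `U`
(e.g. K-trivial when `U` is the universal prefix-free machine, C-trivial
when `U` is the universal plain machine). -/
def MeasTrivial (U : BStr →. BStr) (μ : Measure Cantor) : Prop :=
  ∃ c : ℝ, ∀ n : ℕ, avgCpx U μ n ≤ (cpxN U n : ℝ) + c


/-- self-delimiting unary code -/
def unry (a : ℕ) : BStr := List.replicate a true ++ [false]

theorem unry_prefix : ∀ {a b : ℕ} {s t : BStr}, unry a ++ s <+: unry b ++ t → a = b ∧ s <+: t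
  | 0, 0, s, t, h => by simpa [unry] using h
  | 0, b+1, s, t, h => by simp [unry, List.replicate_succ] at h
  | a+1, 0, s, t, h => by simp [unry, List.replicate_succ] at h
  | a+1, b+1, s, t, h => by
      have h' : unry a ++ s <+: unry b ++ t := by
        simpa [unry, List.replicate_succ] using h
      obtain ⟨h1, h2⟩ := unry_prefix h'
      exact ⟨by omega, h2⟩

/-- self-delimiting code for numbers, of length `O(√n)` -/
def natCode (n : ℕ) : BStr := unry n.unpair.1 ++ unry n.unpair.2

theorem natCode_prefix {a b : ℕ} {s t : BStr} (h : natCode a ++ s <+: natCode b ++ t) :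
    a = b ∧ s <+: t := by
  simp only [natCode, List.append_assoc] at h
  obtain ⟨h1, h⟩ := unry_prefix h
  obtain ⟨h2, h⟩ := unry_prefix h
  refine ⟨?_, h⟩
  rw [← Nat.pair_unpair a, ← Nat.pair_unpair b, h1, h2]

def encP (a : ℕ × BStr) : BStr := natCode a.1 ++ (natCode a.2.length ++ a.2)
def outP (a : ℕ × BStr) : BStr := numStr a.1 ++ a.2

theorem encP_prefix {a b : ℕ × BStr} (h : encP a <+: encP b) : a = b := by
  obtain ⟨h1, h⟩ := natCode_prefix h
  obtain ⟨h2, h⟩ := natCode_prefix h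
  exact Prod.ext h1 (h.eq_of_length h2)

theorem replicate_computable (b : Bool) : Computable (fun n : ℕ => List.replicate n b) := by
  refine Primrec.to_comp ?_
  refine (Primrec.list_map Primrec.list_range (Primrec.const b).to₂).of_eq ?_
  intro n
  simp

theorem unry_computable : Computable unry :=
  Computable.list_append.comp (replicate_computable true) (Computable.const [false])

theorem natCode_computable : Computable natCode :=
  Computable.list_append.comp
    (unry_computable.comp (Computable.fst.comp Computable.unpair))
    (unry_computable.comp (Computable.snd.comp Computable.unpair))

theorem encP_computable : Computable encP :=
  Computable.list_append.comp (natCode_computable.comp Computable.fst)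
    (Computable.list_append.comp
      (natCode_computable.comp (Computable.list_length.comp Computable.snd)) Computable.snd)

theorem outP_computable : Computable outP :=
  Computable.list_append.comp ((replicate_computable false).comp Computable.fst) Computable.snd

def stepP (p : BStr) (t : ℕ) : Option BStr :=
  (Encodable.decode (α := ℕ × BStr) t).bind fun a =>
    bif decide (encP a = p) then some (outP a) else none

theorem stepP_computable : Computable₂ stepP := by
  refine Computable.option_bind (Computable.decode.comp Computable.snd) ?_
  refine Computable.cond ?_ ?_ ?_
  · exact (Primrec.eq (α := BStr)).decide.to_comp.comp
      (encP_computable.comp Computable.snd) (Computable.fst.comp Computable.fst)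
  · exact Computable.option_some.comp (outP_computable.comp Computable.snd)
  · exact Computable.const none

theorem stepP_iff {p : BStr} {t : ℕ} {x : BStr} (h : x ∈ stepP p t) :
    ∃ a, encP a = p ∧ x = outP a := by
  unfold stepP at h
  simp only [Option.mem_def, Option.bind_eq_some_iff] at h
  obtain ⟨a, _, h⟩ := h
  refine ⟨a, ?_⟩
  by_cases h' : encP a = p
  · simp [h'] at h; exact ⟨h', h.symm⟩
  · simp [h'] at h

def machP (p : BStr) : Part BStr := Nat.rfindOpt (stepP p)

theorem machP_partrec : Partrec machP := Partrec.rfindOpt stepP_computable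

theorem mem_machP {p x : BStr} : x ∈ machP p ↔ ∃ a, encP a = p ∧ x = outP a := by
  have key : ∀ {y}, y ∈ machP p → ∃ a, encP a = p ∧ y = outP a := by
    intro y hy
    obtain ⟨t, ht⟩ := Nat.rfindOpt_spec hy
    exact stepP_iff ht
  refine ⟨key, ?_⟩
  rintro ⟨a, ha, rfl⟩
  have hd : (machP p).Dom := by
    refine Nat.rfindOpt_dom.2 ⟨Encodable.encode a, outP a, ?_⟩
    simp [stepP, ha]
  obtain ⟨b, hb, hb'⟩ := key (Part.get_mem hd)
  have hab : a = b := encP_prefix (by rw [ha, hb])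
  rw [hab, ← hb']
  exact Part.get_mem hd

theorem machP_prefixFree : PrefixFreeDom machP := by
  intro p q hp hq h
  obtain ⟨a, ha, _⟩ := mem_machP.1 (Part.get_mem hp)
  obtain ⟨b, hb, _⟩ := mem_machP.1 (Part.get_mem hq)
  subst ha; subst hb
  rw [encP_prefix h]

theorem natCode_length (n : ℕ) : ((natCode n).length : ℝ) ≤ 2 * √n + 2 := by
  have h := Nat.max_sq_add_min_le_pair n.unpair.1 n.unpair.2
  rw [Nat.pair_unpair] at h
  have h1 : (n.unpair.1 : ℝ) ≤ √n := by
    apply Real.le_sqrt_of_sq_le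
    have : n.unpair.1 ^ 2 ≤ n :=
      (Nat.pow_le_pow_left (le_max_left _ n.unpair.2) 2).trans (by omega)
    exact_mod_cast this
  have h2 : (n.unpair.2 : ℝ) ≤ √n := by
    apply Real.le_sqrt_of_sq_le
    have : n.unpair.2 ^ 2 ≤ n :=
      (Nat.pow_le_pow_left (le_max_right n.unpair.1 _) 2).trans (by omega)
    exact_mod_cast this
  simp only [natCode, unry, List.length_append, List.length_replicate, List.length_singleton]
  push_cast
  linarith

theorem cpx_bound (UK : BStr →. BStr) (hUK : UniversalPrefixFree UK) :
    ∃ C : ℝ, (∀ x : BStr, (cpx UK x : ℝ) ≤ x.length + 2 * √x.length + C) ∧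
      ∀ n, (cpx UK (numStr n) : ℝ) ≤ 2 * √n + C := by
  obtain ⟨c, hc⟩ := hUK.2.2 machP machP_partrec machP_prefixFree
  have key : ∀ a : ℕ × BStr, cpx UK (outP a) ≤ (encP a).length + c := by
    intro a
    obtain ⟨q, hq, hx⟩ := hc (encP a) (outP a) (mem_machP.2 ⟨a, rfl, rfl⟩)
    have hmem : q.length ∈ {n | ∃ q : BStr, q.length = n ∧ outP a ∈ UK q} := ⟨q, rfl, hx⟩
    exact (Nat.sInf_le hmem).trans hq
  refine ⟨c + 4, ?_, ?_⟩
  · intro x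
    have h := key (0, x)
    have h1 := natCode_length 0
    have h2 := natCode_length x.length
    have h' : (cpx UK x : ℝ) ≤ ((encP (0, x)).length + c : ℕ) := by
      exact_mod_cast (by simpa [outP, numStr] using h)
    simp only [encP, List.length_append] at h'
    push_cast at h'
    rw [Nat.cast_zero, Real.sqrt_zero] at h1
    linarith
  · intro n
    have h := key (n, [])
    have h1 := natCode_length 0
    have h2 := natCode_length n
    have h' : (cpx UK (numStr n) : ℝ) ≤ ((encP (n, [])).length + c : ℕ) := by
      exact_mod_cast (by simpa [outP] using h)
    simp only [encP, List.length_append, List.length_nil] at h'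
    push_cast at h'
    rw [Nat.cast_zero, Real.sqrt_zero] at h1
    linarith

theorem cyl_ofFn {n : ℕ} (v : Fin n → Bool) : cyl (List.ofFn v) = {Z | ∀ i : Fin n, Z i = v i} := by
  ext Z
  simp only [cyl, Set.mem_ofPred_eq]
  constructor
  · intro h i
    have := h ⟨i, by simp⟩
    simpa using this
  · intro h i
    have := h ⟨i, by simpa using i.2⟩
    simpa using this

theorem cyl_measurable (x : BStr) : MeasurableSet (cyl x) := by
  have : cyl x = ⋂ i : Fin x.length, (fun Z : Cantor => Z i.1) ⁻¹' {x.get i} := by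
    ext Z; simp [cyl]
  rw [this]
  exact MeasurableSet.iInter fun i => (measurable_pi_apply _) (measurableSet_singleton _)

theorem cyl_numStr_anti {m n : ℕ} (h : m ≤ n) : cyl (numStr n) ⊆ cyl (numStr m) := by
  intro Z hZ i
  have := hZ ⟨i, by have := i.2; simp [numStr] at this ⊢; omega⟩
  rw [List.get_eq_getElem] at this ⊢
  simpa [numStr] using this

theorem sum_cyl_le (μ : Measure Cantor) [IsProbabilityMeasure μ] (n : ℕ) :
    ∑ v : Fin n → Bool, (μ (cyl (List.ofFn v))).toReal ≤ 1 := by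
  rw [← ENNReal.toReal_sum (fun _ _ => measure_ne_top _ _), ← tsum_fintype (L := .unconditional _),
    ← measure_iUnion]
  · exact measureReal_le_one
  · intro v w hvw
    rw [Function.onFun, Set.disjoint_left]
    intro Z h1 h2
    rw [cyl_ofFn] at h1 h2
    exact hvw (funext fun i => (h1 i).symm.trans (h2 i))
  · exact fun v => cyl_measurable _

theorem mlac_of_ac {μ lam : Measure Cantor} [IsFiniteMeasure μ] (h : μ ≪ lam) : MLAC μ lam := by
  rintro G ⟨⟨σ, -, hσ⟩, hG⟩
  have hmeas : ∀ m, MeasurableSet (G m) := fun m => by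
    rw [hσ]; exact MeasurableSet.iUnion fun i => cyl_measurable _
  have h0 : lam (limsup G atTop) = 0 := by
    apply measure_limsup_atTop_eq_zero
    refine ne_top_of_le_ne_top ?_ (ENNReal.tsum_le_tsum hG)
    rw [ENNReal.tsum_geometric]
    simp
  have h1 : μ (limsup G atTop) = 0 := h h0
  rw [limsup_eq_iInf_iSup_of_nat] at h1
  have ht := tendsto_measure_iInter_atTop (μ := μ) (s := fun n => ⨆ i ≥ n, G i)
    (fun n => (MeasurableSet.iUnion fun i => MeasurableSet.iUnion fun _ => hmeas i).nullMeasurableSet)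
    (fun a b hab => biSup_mono fun i hi => le_trans hab hi) ⟨0, measure_ne_top _ _⟩
  rw [show μ (⋂ n, ⨆ i ≥ n, G i) = 0 from h1] at ht
  refine le_antisymm (ge_of_tendsto' ht fun n => ?_) bot_le
  exact (iInf_le _ n).trans (measure_mono (le_biSup G (le_refl n)))

theorem hasSum_wt (L : ℕ) :
    HasSum (fun k : ℕ => 1 / ((k + L : ℕ) + 1 : ℝ) - 1 / ((k + L : ℕ) + 2 : ℝ)) (1 / (L + 1 : ℝ)) := by
  rw [hasSum_iff_tendsto_nat_of_nonneg]
  · have : ∀ n : ℕ, ∑ k ∈ Finset.range n,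
        (1 / ((k + L : ℕ) + 1 : ℝ) - 1 / ((k + L : ℕ) + 2 : ℝ))
        = 1 / (L + 1 : ℝ) - 1 / ((n + L : ℕ) + 1 : ℝ) := by
      intro n
      induction n with
      | zero => simp
      | succ n ih => rw [Finset.sum_range_succ, ih]; push_cast; ring
    simp_rw [this]
    have h := (tendsto_one_div_add_atTop_nhds_zero_nat (𝕜 := ℝ)).comp (tendsto_add_atTop_nat L)
    simpa using h.const_sub (1 / (L + 1 : ℝ))
  · intro k
    rw [sub_nonneg]
    apply one_div_le_one_div_of_le <;> first | positivity | linarith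

noncomputable def wt (k : ℕ) : ENNReal := ENNReal.ofReal (1 / ((k : ℝ) + 1) - 1 / ((k : ℝ) + 2))

theorem tsum_wt (L : ℕ) : ∑' k, wt (k + L) = ENNReal.ofReal (1 / (L + 1 : ℝ)) := by
  rw [← (hasSum_wt L).tsum_eq, ENNReal.ofReal_tsum_of_nonneg _ (hasSum_wt L).summable]
  · rfl
  · intro k
    rw [sub_nonneg]
    apply one_div_le_one_div_of_le <;> first | positivity | linarith

theorem exists_measure (lam : Measure Cantor) (hlam : IsUniform lam) :
    ∃ μ : Measure Cantor, IsProbabilityMeasure μ ∧ μ ≪ lam ∧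
      ∀ L n : ℕ, n ≤ 2 ^ L → 1 / (L + 1 : ℝ) ≤ (μ (cyl (numStr n))).toReal := by
  have hne : ∀ x, lam (cyl x) ≠ 0 := fun x => by rw [hlam]; simp
  have hnt : ∀ x, lam (cyl x) ≠ ⊤ := fun x => by
    rw [hlam]; exact ENNReal.pow_ne_top (by simp)
  let ν : ℕ → Measure Cantor := fun k => ProbabilityTheory.cond lam (cyl (numStr (2 ^ k)))
  have hν : ∀ k, IsProbabilityMeasure (ν k) := fun k =>
    ProbabilityTheory.cond_isProbabilityMeasure_of_finite (hne _) (hnt _)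
  let μ : Measure Cantor := Measure.sum fun k => wt k • ν k
  have hμ : ∀ s, MeasurableSet s → μ s = ∑' k, wt k * ν k s := fun s hs => by
    simp [μ, Measure.sum_apply _ hs]
  have hp : IsProbabilityMeasure μ := ⟨by
    rw [hμ _ MeasurableSet.univ]
    have := tsum_wt 0
    simpa using this⟩
  refine ⟨μ, hp, ?_, ?_⟩
  · refine Measure.absolutelyContinuous_sum_left fun k => ?_
    exact (ProbabilityTheory.cond_absolutelyContinuous).smul_left _
  · intro L n hn
    have h1 : ENNReal.ofReal (1 / (L + 1 : ℝ)) ≤ μ (cyl (numStr n)) := by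
      rw [← tsum_wt, hμ _ (cyl_measurable _)]
      refine le_trans ?_ (ENNReal.tsum_comp_le_tsum_of_injective (add_left_injective L) _)
      refine ENNReal.tsum_le_tsum fun k => ?_
      have hk : ν (k + L) (cyl (numStr n)) = 1 := by
        have hsub : cyl (numStr (2 ^ (k + L))) ⊆ cyl (numStr n) :=
          cyl_numStr_anti (hn.trans (Nat.pow_le_pow_right (by norm_num) (by omega)))
        simp only [ν]
        rw [ProbabilityTheory.cond_apply (cyl_measurable _), Set.inter_eq_left.2 hsub]
        exact ENNReal.inv_mul_cancel (hne _) (hnt _)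
      simp [hk]
    exact (ENNReal.ofReal_le_iff_le_toReal (measure_ne_top _ _)).1 h1

theorem asym (C θ : ℝ) (hθ : θ < 1) : ∃ c : ℝ, ∀ n : ℕ,
    (n : ℝ) ^ θ + 2 * √n + C - n * (1 / ((Nat.log 2 n + 1 : ℕ) + 1 : ℝ)) ≤ c := by
  set τ := max θ (1 / 2) with hτ
  have hτ1 : τ < 1 := max_lt hθ (by norm_num)
  have hε : 0 < 1 - τ := by linarith
  have hev : ∀ᶠ n : ℕ in atTop, (n : ℝ) ^ θ + 2 * √n + C
      - n * (1 / ((Nat.log 2 n + 1 : ℕ) + 1 : ℝ)) ≤ C := by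
    have h1 : (fun x : ℝ => 3 * (Real.log x / Real.log 2 + 2)) =o[atTop] (fun x : ℝ => x ^ (1 - τ)) := by
      refine Asymptotics.IsLittleO.const_mul_left (Asymptotics.IsLittleO.add ?_ ?_) _
      · simp_rw [div_eq_inv_mul]
        exact (isLittleO_log_rpow_atTop hε).const_mul_left _
      · refine Asymptotics.isLittleO_const_left.2 (Or.inr ?_)
        exact tendsto_norm_atTop_atTop.comp (tendsto_rpow_atTop hε)
    have h2 := tendsto_natCast_atTop_atTop.eventually (h1.bound one_pos)
    filter_upwards [h2, eventually_ge_atTop 1] with n hn hn1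
    have hn1' : (1 : ℝ) ≤ n := by exact_mod_cast hn1
    have hn0 : (0 : ℝ) < n := by linarith
    have hl : (Nat.log 2 n : ℝ) ≤ Real.log n / Real.log 2 := Real.natLog_le_logb n 2
    rw [one_mul, Real.norm_of_nonneg (Real.rpow_nonneg hn0.le _)] at hn
    have hn' := (le_abs_self _).trans hn
    have ha : (n : ℝ) ^ θ ≤ (n : ℝ) ^ τ := Real.rpow_le_rpow_of_exponent_le hn1' (le_max_left _ _)
    have hb : √(n : ℝ) ≤ (n : ℝ) ^ τ := by
      rw [Real.sqrt_eq_rpow]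
      exact Real.rpow_le_rpow_of_exponent_le hn1' (le_max_right _ _)
    have hmul : (n : ℝ) ^ τ * (n : ℝ) ^ (1 - τ) = n := by
      rw [← Real.rpow_add hn0]; simp
    have hp : 0 < (n : ℝ) ^ τ := Real.rpow_pos_of_pos hn0 _
    have hd : 0 < ((Nat.log 2 n + 1 : ℕ) + 1 : ℝ) := by positivity
    have : 3 * (n : ℝ) ^ τ ≤ n * (1 / ((Nat.log 2 n + 1 : ℕ) + 1 : ℝ)) := by
      rw [mul_one_div, le_div_iff₀ hd]
      push_cast
      have h5 := mul_le_mul_of_nonneg_left (show 3 * ((Nat.log 2 n : ℝ) + 2) ≤ (n : ℝ) ^ (1 - τ) by linarith) hp.le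
      rw [hmul] at h5
      linarith
    linarith
  have hb : IsBoundedUnder (· ≤ ·) atTop (fun n : ℕ => (n : ℝ) ^ θ + 2 * √n + C
      - n * (1 / ((Nat.log 2 n + 1 : ℕ) + 1 : ℝ))) := ⟨C, by simpa using hev⟩
  obtain ⟨c, hc⟩ := hb.bddAbove_range
  exact ⟨c, fun n => hc ⟨n, rfl⟩⟩
/-- there is an ML absolutely continuous measure `μ` such that
for every `θ ∈ (0,1)` one has `K(μ↾n) ≤ n - n^θ + c_θ` for a constant `c_θ`
and all `n`. -/
theorem exists_MLAC_measure_with_slow_K_growth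
    (UK : BStr →. BStr) (hUK : UniversalPrefixFree UK)
    (lam : Measure Cantor) (hlam : IsUniform lam) :
    ∃ μ : Measure Cantor, IsProbabilityMeasure μ ∧ MLAC μ lam ∧
      ∀ θ : ℝ, 0 < θ → θ < 1 → ∃ cθ : ℝ, ∀ n : ℕ,
        avgCpx UK μ n ≤ (n : ℝ) - (n : ℝ) ^ θ + cθ := by
  obtain ⟨μ, hp, hac, hμ⟩ := exists_measure lam hlam
  obtain ⟨C, hC1, hC2⟩ := cpx_bound UK hUK
  refine ⟨μ, hp, mlac_of_ac hac, fun θ _ hθ => ?_⟩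
  obtain ⟨c, hc⟩ := asym C θ hθ
  refine ⟨c, fun n => ?_⟩
  have hC0 : 0 ≤ C := by
    have h := hC2 0
    have h0 : (0 : ℝ) ≤ cpx UK (numStr 0) := by positivity
    simp at h
    linarith
  set z : Fin n → Bool := fun _ => false with hz
  have hzn : List.ofFn z = numStr n := by simp [hz, numStr]
  set A : ℝ := n + 2 * √n + C with hA
  have hA0 : 0 ≤ A := by positivity
  have hterm : ∀ v : Fin n → Bool, (cpx UK (List.ofFn v) : ℝ) * (μ (cyl (List.ofFn v))).toReal ≤
      A * (μ (cyl (List.ofFn v))).toReal - if v = z then n * (μ (cyl (numStr n))).toReal else 0 := by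
    intro v
    split_ifs with hv
    · rw [hv, hzn, ← sub_mul]
      refine mul_le_mul_of_nonneg_right ?_ ENNReal.toReal_nonneg
      linarith [hC2 n]
    · rw [sub_zero]
      refine mul_le_mul_of_nonneg_right ?_ ENNReal.toReal_nonneg
      simpa using hC1 (List.ofFn v)
  have hsum : avgCpx UK μ n ≤ A - n * (μ (cyl (numStr n))).toReal := by
    refine (Finset.sum_le_sum fun v _ => hterm v).trans ?_
    rw [Finset.sum_sub_distrib, ← Finset.mul_sum]
    have := mul_le_mul_of_nonneg_left (sum_cyl_le μ n) hA0
    simp only [Finset.sum_ite_eq', Finset.mem_univ, if_true]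
    linarith
  have h1 := hμ (Nat.log 2 n + 1) n (Nat.lt_pow_succ_log_self (by norm_num) n).le
  have h2 := mul_le_mul_of_nonneg_left h1 (Nat.cast_nonneg (α := ℝ) n)
  have h3 := hc n
  linarith
end

section
/- There is a constant d such that for every b ∈ ℕ, every A ∈ 2^ℕ that is C-trivial via constant b (i.e., C(A↾n) ≤ C(n) + b for all n) is K-trivial via constant 2b + d (i.e., K(A↾n) ≤ K(n) + 2b + d for all n). -/
open MeasureTheory Filter

theorem cpx_le_of_mem {U : BStr →. BStr} {x q : BStr} (h : x ∈ U q) : cpx U x ≤ q.length :=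
  Nat.sInf_le ⟨q, rfl, h⟩

theorem cpx_spec_of_mem {U : BStr →. BStr} {x q : BStr} (h : x ∈ U q) :
    ∃ p : BStr, p.length = cpx U x ∧ x ∈ U p := by
  have : cpx U x ∈ {n | ∃ q : BStr, q.length = n ∧ x ∈ U q} := Nat.sInf_mem ⟨_, q, rfl, h⟩
  exact this

theorem plain_total {U : BStr →. BStr} (hU : UniversalPlain U) (x : BStr) : ∃ q, x ∈ U q := by
  obtain ⟨c, hc⟩ := hU.2 (fun _ => Part.some x) (Computable.const x)
  obtain ⟨q, _, hq⟩ := hc [] x (Part.mem_some x)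
  exact ⟨q, hq⟩

theorem prefix_total {U : BStr →. BStr} (hU : UniversalPrefixFree U) (x : BStr) :
    ∃ q, x ∈ U q := by
  have h1 : Partrec (fun p : BStr =>
      ((if p.length = 0 then some x else none : Option BStr) : Part BStr)) := by
    apply Computable.ofOption
    apply Primrec.to_comp
    exact Primrec.ite (Primrec.eq.comp Primrec.list_length (Primrec.const 0))
      (Primrec.const _) (Primrec.const _)
  obtain ⟨c, hc⟩ := hU.2.2 _ h1 (by
    intro p q hp hq _
    have key : ∀ r : BStr, ((if r.length = 0 then some x else none : Option BStr) : Part BStr).Dom →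
        r = [] := by
      intro r hr
      by_contra hne
      have : r.length ≠ 0 := by simpa using hne
      simp [this] at hr
    rw [key p hp, key q hq])
  obtain ⟨q, _, hq⟩ := hc [] x (by simp)
  exact ⟨q, hq⟩

/-- Value of a string in binary. -/
def bval (p : BStr) : ℕ := p.foldr (fun a n => 2 * n + (bif a then 1 else 0)) 0

theorem primrec_bval : Primrec bval := by
  unfold bval
  refine Primrec.list_foldr (h := fun _ (z : Bool × ℕ) => 2 * z.2 + (bif z.1 then 1 else 0))
    Primrec.id (Primrec.const 0) ?_
  refine Primrec.nat_add.comp (Primrec.nat_mul.comp (Primrec.const 2)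
    (Primrec.snd.comp Primrec.snd)) ?_
  exact Primrec.cond (Primrec.fst.comp Primrec.snd) (Primrec.const 1) (Primrec.const 0)

theorem bval_surj (l : ℕ) : ∀ j < 2 ^ l, ∃ r : BStr, r.length = l ∧ bval r = j := by
  induction l with
  | zero => intro j hj; exact ⟨[], rfl, by simp at hj; simp [bval, hj]⟩
  | succ l ih =>
    intro j hj
    obtain ⟨r, hr, hv⟩ := ih (j / 2) (by rw [pow_succ] at hj; omega)
    refine ⟨(j % 2 == 1) :: r, by simp [hr], ?_⟩
    have : bval ((j % 2 == 1) :: r) = 2 * bval r + (bif (j % 2 == 1) then 1 else 0) := rfl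
    rw [this, hv]
    rcases Nat.mod_two_eq_zero_or_one j with h | h <;> simp [h] <;> omega

theorem primrec_numStr : Primrec numStr := by
  have : Primrec (fun n => (List.range n).map (fun _ => false)) :=
    Primrec.list_map Primrec.list_range (Primrec.const false).to₂
  refine this.of_eq fun n => ?_
  simp [numStr]

theorem cpxN_bound {U : BStr →. BStr} (hU : UniversalPlain U) :
    ∃ c, ∀ n j, j < 2 ^ n → cpxN U (n + j) ≤ n + c := by
  have h : Computable (fun p : BStr => numStr (p.length + bval p)) :=
    (primrec_numStr.comp (Primrec.nat_add.comp Primrec.list_length primrec_bval)).to_comp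
  obtain ⟨c, hc⟩ := hU.2 _ h.partrec
  refine ⟨c, fun n j hj => ?_⟩
  obtain ⟨r, hr, hv⟩ := bval_surj n j hj
  obtain ⟨q, hq, hm⟩ := hc r (numStr (n + j)) (by simp [hr, hv])
  exact (cpx_le_of_mem hm).trans (by omega)

theorem primrec_count {α : Type*} [Primcodable α] {R : α → ℕ → Prop} [∀ a, DecidablePred (R a)]
    (hR : PrimrecRel R) : Primrec₂ fun a n => Nat.count (R a) n := by
  have : Primrec₂ (fun (a : α) (n : ℕ) =>
      (Nat.rec 0 (fun k v => v + if R a k then 1 else 0) n : ℕ)) := by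
    refine Primrec.nat_rec (f := fun _ => 0)
      (g := fun (a : α) (z : ℕ × ℕ) => z.2 + if R a z.1 then 1 else 0) (Primrec.const 0) ?_
    refine Primrec.nat_add.comp (Primrec.snd.comp Primrec.snd) ?_
    exact Primrec.ite (hR.comp Primrec.fst (Primrec.fst.comp Primrec.snd))
      (Primrec.const 1) (Primrec.const 0)
  refine this.of_eq fun a n => ?_
  induction n with
  | zero => simp
  | succ n ih => rw [Nat.count_succ, ← ih]

theorem enum_lemma {α : Type*} [Primcodable α] (f : α → ℕ → Option BStr) (hf : Primrec₂ f) :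
    ∃ g : α → ℕ →. BStr, Partrec₂ g ∧ ∀ a N,
      (∀ T : Finset BStr, (∀ σ ∈ T, ∃ s, f a s = some σ) → T.card ≤ N) →
      ∀ s σ, f a s = some σ → ∃ j < N, σ ∈ g a j := by
  classical
  let New : α → ℕ → Prop := fun a s => f a s ≠ none ∧ ∀ i < s, f a i ≠ f a s
  have hNew : PrimrecRel New := by
    refine PrimrecPred.and ?_ ?_
    · exact (Primrec.eq.comp (hf.comp Primrec.fst Primrec.snd) (Primrec.const none)).not
    · have h1 : PrimrecRel (fun (y : α × ℕ) (i : ℕ) => f y.1 i = f y.1 y.2) :=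
        Primrec.eq.comp (hf.comp (Primrec.fst.comp Primrec.fst) Primrec.snd)
          (hf.comp (Primrec.fst.comp Primrec.fst) (Primrec.snd.comp Primrec.fst))
      have h2 : PrimrecPred (fun y : α × ℕ => Nat.count (fun i => f y.1 i = f y.1 y.2) y.2 = 0) :=
        Primrec.eq.comp ((primrec_count h1).comp Primrec.id Primrec.snd) (Primrec.const 0)
      refine h2.of_eq fun y => ?_
      rw [Nat.count_eq_card_filter_range, Finset.card_eq_zero, Finset.filter_eq_empty_iff]
      simp
  have hR : PrimrecRel (fun (z : α × ℕ) (s : ℕ) => New z.1 s ∧ Nat.count (New z.1) s = z.2) := by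
    refine PrimrecPred.and ?_ ?_
    · exact hNew.comp (Primrec.fst.comp Primrec.fst) Primrec.snd
    · exact Primrec.eq.comp ((primrec_count hNew).comp (Primrec.fst.comp Primrec.fst) Primrec.snd)
        (Primrec.snd.comp Primrec.fst)
  let h : α × ℕ → ℕ → Option BStr := fun z s =>
    if New z.1 s ∧ Nat.count (New z.1) s = z.2 then f z.1 s else none
  have hh : Primrec₂ h :=
    Primrec.ite hR (hf.comp (Primrec.fst.comp Primrec.fst) Primrec.snd) (Primrec.const none)
  refine ⟨fun a j => Nat.rfindOpt (h (a, j)), Partrec.rfindOpt hh.to_comp, ?_⟩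
  intro a N hN s σ hs
  have hex : ∃ s, f a s = some σ := ⟨s, hs⟩
  set s0 := Nat.find hex with hs0
  have hf0 : f a s0 = some σ := Nat.find_spec hex
  have hn0 : New a s0 := by
    refine ⟨by simp [hf0], fun i hi => ?_⟩
    rw [hf0]
    exact Nat.find_min hex hi
  refine ⟨Nat.count (New a) s0, ?_, ?_⟩
  · have h1 := hN (((Finset.range (s0 + 1)).filter (New a)).image (fun i => (f a i).getD [])) (by
      intro τ hτ
      simp only [Finset.mem_image, Finset.mem_filter] at hτ
      obtain ⟨i, ⟨_, hi⟩, rfl⟩ := hτ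
      obtain ⟨y, hy⟩ := Option.ne_none_iff_exists'.1 hi.1
      exact ⟨i, by simp [hy]⟩)
    rw [Finset.card_image_of_injOn, ← Nat.count_eq_card_filter_range, Nat.count_succ,
      if_pos hn0] at h1
    · exact h1
    · intro i hi k hk hik
      simp only [Finset.coe_filter, Set.mem_ofPred_eq] at hi hk
      obtain ⟨y, hy⟩ := Option.ne_none_iff_exists'.1 hi.2.1
      obtain ⟨z, hz⟩ := Option.ne_none_iff_exists'.1 hk.2.1
      simp only [hy, hz, Option.getD_some] at hik
      rcases lt_trichotomy i k with h | h | h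
      · exact absurd (by rw [hy, hz, hik]) (hk.2.2 i h)
      · exact h
      · exact absurd (by rw [hy, hz, hik]) (hi.2.2 k h)
  · have hd : (Nat.rfindOpt (h (a, Nat.count (New a) s0))).Dom :=
      Nat.rfindOpt_dom.2 ⟨s0, σ, by simp [h, hn0, hf0]⟩
    obtain ⟨τ, hτ⟩ := Part.dom_iff_mem.1 hd
    obtain ⟨s1, h1⟩ := Nat.rfindOpt_spec hτ
    simp only [h] at h1
    split_ifs at h1 with hc
    · have : s1 = s0 := Nat.count_injective hc.1 hn0 hc.2
      rw [this, hf0] at h1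
      have : τ = σ := by simpa using h1.symm
      exact this ▸ hτ
    · simp at h1

theorem exists_stage {U : BStr →. BStr} (hU : Partrec U) :
    ∃ E : ℕ → BStr → Option BStr, Primrec₂ E ∧ (∀ s t p x, s ≤ t → E s p = some x → E t p = some x) ∧
      ∀ p x, x ∈ U p ↔ ∃ t, E t p = some x := by
  obtain ⟨c, hc⟩ := Nat.Partrec.Code.exists_code.1 hU
  refine ⟨fun t p => (Nat.Partrec.Code.evaln t c (Encodable.encode p)).bind
    (fun y => (Encodable.decode y : Option BStr)), ?_, ?_, ?_⟩
  · refine Primrec.option_bind ?_ (Primrec.decode.comp Primrec.snd)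
    exact Nat.Partrec.Code.primrec_evaln.comp
      ((Primrec.fst.pair (Primrec.const c)).pair (Primrec.encode.comp Primrec.snd))
  · intro s t p x hst h
    rw [Option.bind_eq_some_iff] at h ⊢
    obtain ⟨y, hy, hx⟩ := h
    exact ⟨y, Nat.Partrec.Code.evaln_mono hst hy, hx⟩
  · intro p x
    have key : ∀ y, y ∈ Nat.Partrec.Code.eval c (Encodable.encode p) ↔
        ∃ x ∈ U p, Encodable.encode x = y := by
      intro y
      rw [hc]
      simp [Encodable.encodek]
    constructor
    · intro hx
      obtain ⟨t, ht⟩ := Nat.Partrec.Code.evaln_complete.1 ((key _).2 ⟨x, hx, rfl⟩)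
      exact ⟨t, by rw [Option.bind_eq_some_iff]; exact ⟨_, ht, Encodable.encodek x⟩⟩
    · rintro ⟨t, ht⟩
      rw [Option.bind_eq_some_iff] at ht
      obtain ⟨y, hy, hx⟩ := ht
      obtain ⟨xb, hxb, rfl⟩ := (key y).1 (Nat.Partrec.Code.evaln_sound hy)
      rw [Encodable.encodek] at hx
      cases hx
      exact hxb

/-- The strings of length at most `L`. -/
theorem short_strings (L : ℕ) : ∃ F : Finset BStr, (∀ p : BStr, p.length ≤ L → p ∈ F) ∧
    F.card ≤ 2 ^ (L + 1) := by
  classical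
  refine ⟨(Finset.range (L + 1)).biUnion
    (fun l => (Finset.univ : Finset (Fin l → Bool)).image (fun v => List.ofFn v)), ?_, ?_⟩
  · intro p hp
    simp only [Finset.mem_biUnion, Finset.mem_range, Finset.mem_image]
    exact ⟨p.length, by omega, p.get, Finset.mem_univ _, List.ofFn_get p⟩
  · refine Finset.card_biUnion_le.trans ?_
    have : ∀ l ∈ Finset.range (L + 1),
        ((Finset.univ : Finset (Fin l → Bool)).image (fun v => List.ofFn v)).card ≤ 2 ^ l := by
      intro l _
      refine Finset.card_image_le.trans ?_
      simp
    refine (Finset.sum_le_sum this).trans ?_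
    have := Nat.geomSum_eq (m := 2) le_rfl (L + 1)
    rw [this]
    simp

theorem primrec_two_pow : Primrec (fun n : ℕ => 2 ^ n) := by
  have : Primrec (fun n : ℕ => (Nat.rec 1 (fun _ v => 2 * v) n : ℕ)) :=
    Primrec.nat_rec₁ 1 (Primrec.nat_mul.comp (Primrec.const 2) Primrec.snd)
  refine this.of_eq fun n => ?_
  induction n with
  | zero => rfl
  | succ n ih => rw [pow_succ, ← ih]; exact Nat.mul_comm _ _

theorem seg_length (A : Cantor) (n : ℕ) : (seg A n).length = n := by simp [seg]

theorem seg_take (A : Cantor) (n j : ℕ) : (seg A (n + j)).take n = seg A n := by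
  apply List.ext_getElem
  · simp [seg]
  · intro i h1 h2
    simp [seg]

/-- The enumeration of candidates for initial segments. -/
theorem candidates {U : BStr →. BStr} (hU : UniversalPlain U) :
    ∃ (e : ℕ) (f : ℕ × ℕ → ℕ → Option BStr), Primrec₂ f ∧
      (∀ n b, ∀ T : Finset BStr, (∀ σ ∈ T, ∃ s, f (n, b) s = some σ) → T.card ≤ 2 ^ (b + e)) ∧
      ∀ (b : ℕ) (A : Cantor), (∀ n : ℕ, cpx U (seg A n) ≤ cpxN U n + b) →
        ∀ n, ∃ s, f (n, b) s = some (seg A n) := by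
  classical
  obtain ⟨c, hc⟩ := cpxN_bound hU
  obtain ⟨E, hE, hmono, hspec⟩ := exists_stage hU.1
  -- `H (n, b) t i`: prefix of length `n` of the output of program number `i`
  let H : (ℕ × ℕ) × ℕ → ℕ → Option BStr := fun z i =>
    (Encodable.decode₂ BStr i).bind fun p =>
      if p.length ≤ z.1.1 + z.1.2 + c then (E z.2 p).map (fun x => x.take z.1.1) else none
  have hH : Primrec₂ H := by
    refine Primrec.option_bind (Primrec.decode₂.comp Primrec.snd) ?_
    refine Primrec.ite ?_ ?_ (Primrec.const none)
    · refine Primrec.nat_le.comp (Primrec.list_length.comp Primrec.snd) ?_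
      have h1 : Primrec (fun a : (((ℕ × ℕ) × ℕ) × ℕ) × BStr => a.1.1.1) :=
        Primrec.fst.comp (Primrec.fst.comp Primrec.fst)
      exact Primrec.nat_add.comp (Primrec.nat_add.comp (Primrec.fst.comp h1) (Primrec.snd.comp h1))
        (Primrec.const c)
    · refine Primrec.option_map ?_ ?_
      · exact hE.comp (Primrec.snd.comp (Primrec.fst.comp Primrec.fst)) Primrec.snd
      · exact Primrec.list_take.comp (Primrec.fst.comp (Primrec.fst.comp (Primrec.fst.comp
          (Primrec.fst.comp Primrec.fst)))) Primrec.snd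
  have hHspec : ∀ n b t i σ, H ((n, b), t) i = some σ ↔ ∃ p x : BStr,
      Encodable.decode₂ BStr i = some p ∧ p.length ≤ n + b + c ∧ E t p = some x ∧ x.take n = σ := by
    intro n b t i σ
    simp only [H, Option.bind_eq_some_iff]
    constructor
    · rintro ⟨p, hp, h⟩
      split_ifs at h with hl
      obtain ⟨x, hx, hxσ⟩ := Option.map_eq_some_iff.1 h
      exact ⟨p, x, hp, hl, hx, hxσ⟩
    · rintro ⟨p, x, hp, hl, hx, hxσ⟩
      exact ⟨p, hp, by rw [if_pos hl, hx]; simp [hxσ]⟩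
  let f : ℕ × ℕ → ℕ → Option BStr := fun a s =>
    (Encodable.decode s : Option (BStr × ℕ)).bind fun w =>
      if 2 ^ a.1 ≤ Nat.count (fun i => H (a, w.2) i = some w.1) w.2 then some w.1 else none
  have hf : Primrec₂ f := by
    refine Primrec.option_bind (Primrec.decode.comp Primrec.snd) ?_
    refine Primrec.ite ?_ (Primrec.option_some.comp (Primrec.fst.comp Primrec.snd))
      (Primrec.const none)
    refine Primrec.nat_le.comp (primrec_two_pow.comp (Primrec.fst.comp
      (Primrec.fst.comp Primrec.fst))) ?_
    have hR : PrimrecRel (fun (y : (ℕ × ℕ) × (BStr × ℕ)) (i : ℕ) =>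
        H (y.1, y.2.2) i = some y.2.1) := by
      refine Primrec.eq.comp (hH.comp ((Primrec.fst.comp Primrec.fst).pair
        (Primrec.snd.comp (Primrec.snd.comp Primrec.fst))) Primrec.snd) ?_
      exact Primrec.option_some.comp (Primrec.fst.comp (Primrec.snd.comp Primrec.fst))
    exact (primrec_count hR).comp ((Primrec.fst.comp Primrec.fst).pair Primrec.snd)
      (Primrec.snd.comp Primrec.snd)
  have hfspec : ∀ n b s σ, f (n, b) s = some σ ↔ ∃ t,
      (Encodable.decode s : Option (BStr × ℕ)) = some (σ, t) ∧
      2 ^ n ≤ Nat.count (fun i => H ((n, b), t) i = some σ) t := by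
    intro n b s σ
    simp only [f, Option.bind_eq_some_iff]
    constructor
    · rintro ⟨⟨σb, t⟩, hp, h⟩
      split_ifs at h with hl
      cases h
      exact ⟨t, hp, hl⟩
    · rintro ⟨t, hp, hl⟩
      exact ⟨(σ, t), hp, by rw [if_pos hl]⟩
  refine ⟨c + 1, f, hf, ?_, ?_⟩
  · intro n b T hT
    obtain ⟨F, hF, hFc⟩ := short_strings (n + b + c)
    let P : BStr → Finset BStr := fun σ => F.filter (fun p => ∃ x ∈ U p, x.take n = σ)
    have hP : ∀ σ ∈ T, 2 ^ n ≤ (P σ).card := by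
      intro σ hσ
      obtain ⟨s, hs⟩ := hT σ hσ
      obtain ⟨t, _, ht⟩ := (hfspec n b s σ).1 hs
      refine ht.trans ?_
      rw [Nat.count_eq_card_filter_range]
      refine Finset.card_le_card_of_injOn
        (fun i => (Encodable.decode₂ BStr i).getD []) ?_ ?_
      · intro i hi
        simp only [Finset.coe_filter, Set.mem_ofPred_eq] at hi
        obtain ⟨p, x, hp, hl, hx, hxσ⟩ := (hHspec n b t i σ).1 hi.2
        simp only [P, Finset.coe_filter, Set.mem_ofPred_eq, hp, Option.getD_some]
        exact ⟨hF p hl, x, (hspec p x).2 ⟨t, hx⟩, hxσ⟩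
      · intro i hi k hk hik
        simp only [Finset.coe_filter, Set.mem_ofPred_eq] at hi hk
        obtain ⟨p, x, hp, -⟩ := (hHspec n b t i σ).1 hi.2
        obtain ⟨pb, xb, hpb, -⟩ := (hHspec n b t k σ).1 hk.2
        simp only [hp, hpb, Option.getD_some] at hik
        subst hik
        exact (Encodable.mem_decode₂.1 hp).symm.trans (Encodable.mem_decode₂.1 hpb)
    have hdisj : (T : Set BStr).PairwiseDisjoint P := by
      intro σ _ τ _ hne
      rw [Function.onFun, Finset.disjoint_left]
      intro p hp hpb
      simp only [P, Finset.mem_filter] at hp hpb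
      obtain ⟨_, x, hx, rfl⟩ := hp
      obtain ⟨_, y, hy, rfl⟩ := hpb
      exact hne (by rw [Part.mem_unique hx hy])
    have h1 : T.card * 2 ^ n ≤ (T.biUnion P).card := by
      rw [Finset.card_biUnion hdisj]
      simpa using Finset.card_nsmul_le_sum T (fun σ => (P σ).card) (2 ^ n) hP
    have h2 : (T.biUnion P).card ≤ F.card := Finset.card_le_card (by
      intro p hp
      simp only [Finset.mem_biUnion, P, Finset.mem_filter] at hp
      obtain ⟨_, _, h, _⟩ := hp
      exact h)
    have h3 : T.card * 2 ^ n ≤ 2 ^ (b + (c + 1)) * 2 ^ n := by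
      rw [← pow_add]
      refine (h1.trans h2).trans (hFc.trans (le_of_eq ?_))
      congr 1
      omega
    exact Nat.le_of_mul_le_mul_right h3 (by positivity)
  · intro b A hA n
    have hex : ∀ j : Fin (2 ^ n), ∃ q : BStr, q.length ≤ n + b + c ∧ seg A (n + j) ∈ U q := by
      intro j
      obtain ⟨q0, hq0⟩ := plain_total hU (seg A (n + j))
      obtain ⟨q, hq, hm⟩ := cpx_spec_of_mem hq0
      refine ⟨q, ?_, hm⟩
      have := hA (n + j)
      have := hc n j j.2
      omega
    choose q hql hqU using hex
    have hst : ∀ j, ∃ t, E t (q j) = some (seg A (n + j)) := fun j => (hspec _ _).1 (hqU j)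
    choose st hst using hst
    let t : ℕ := ∑ j, (st j + Encodable.encode (q j) + 1)
    have hle : ∀ j, st j + Encodable.encode (q j) + 1 ≤ t := fun j =>
      Finset.single_le_sum (f := fun j => st j + Encodable.encode (q j) + 1)
        (fun _ _ => Nat.zero_le _) (Finset.mem_univ j)
    refine ⟨Encodable.encode (seg A n, t), (hfspec _ _ _ _).2 ⟨t, Encodable.encodek _, ?_⟩⟩
    rw [Nat.count_eq_card_filter_range]
    have hcard : (Finset.univ : Finset (Fin (2 ^ n))).card = 2 ^ n := by simp
    rw [← hcard]
    refine Finset.card_le_card_of_injOn (fun j => Encodable.encode (q j)) ?_ ?_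
    · intro j _
      simp only [Finset.coe_filter, Set.mem_ofPred_eq, Finset.mem_range]
      have := hle j
      refine ⟨by omega, (hHspec _ _ _ _ _).2 ⟨q j, seg A (n + j), Encodable.encodek₂ _, hql j,
        hmono _ _ _ _ (by omega) (hst j), seg_take A n j⟩⟩
    · intro i _ j _ hij
      have hq : q i = q j := Encodable.encode_injective hij
      have h1 := hqU i
      rw [hq] at h1
      have h2 := congrArg List.length (Part.mem_unique h1 (hqU j))
      rw [seg_length, seg_length] at h2
      exact Fin.ext (by omega)

/-- Parsing `1^b 0 r q` with `|r| = b + e`. -/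
def parseProg (e : ℕ) (p : BStr) : Option (ℕ × ℕ × BStr) :=
  if 2 * p.idxOf false + 1 + e ≤ p.length then
    some (p.idxOf false, bval ((p.drop (p.idxOf false + 1)).take (p.idxOf false + e)),
      p.drop (2 * p.idxOf false + 1 + e))
  else none

theorem primrec_parseProg (e : ℕ) : Primrec (parseProg e) := by
  have hi : Primrec (fun p : BStr => p.idxOf false) :=
    Primrec.list_idxOf.comp (Primrec.const false) Primrec.id
  have h1 : Primrec (fun p : BStr => 2 * p.idxOf false + 1 + e) :=
    Primrec.nat_add.comp (Primrec.succ.comp (Primrec.nat_mul.comp (Primrec.const 2) hi))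
      (Primrec.const e)
  refine Primrec.ite (Primrec.nat_le.comp h1 Primrec.list_length) ?_ (Primrec.const none)
  refine Primrec.option_some.comp (hi.pair (Primrec.pair ?_ ?_))
  · refine primrec_bval.comp (Primrec.list_take.comp (Primrec.nat_add.comp hi (Primrec.const e)) ?_)
    exact Primrec.list_drop.comp (Primrec.succ.comp hi) Primrec.id
  · exact Primrec.list_drop.comp h1 Primrec.id

theorem parseProg_append {e : ℕ} {p s : BStr} {z : ℕ × ℕ × BStr} (h : parseProg e p = some z) :
    ∃ m, parseProg e (p ++ s) = some (z.1, m, z.2.2 ++ s) := by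
  unfold parseProg at h
  split_ifs at h with hl
  cases h
  have hlt : p.idxOf false < p.length := by omega
  have hmem : false ∈ p := List.idxOf_lt_length_iff.1 hlt
  have hidx : (p ++ s).idxOf false = p.idxOf false := List.idxOf_append_of_mem hmem
  unfold parseProg
  rw [hidx, if_pos (by rw [List.length_append]; omega)]
  exact ⟨bval (List.take (List.idxOf false p + e) (List.drop (List.idxOf false p + 1) (p ++ s))),
    by rw [List.drop_append_of_le_length hl]⟩

theorem parseProg_build (e b : ℕ) (r q : BStr) (hr : r.length = b + e) :
    parseProg e (List.replicate b true ++ (false :: (r ++ q))) = some (b, bval r, q) := by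
  have hidx : (List.replicate b true ++ (false :: (r ++ q))).idxOf false = b := by
    rw [List.idxOf_append_of_notMem (by simp)]
    simp
  unfold parseProg
  rw [hidx, if_pos (by simp; omega)]
  have h1 : (List.replicate b true ++ (false :: (r ++ q))).drop (b + 1) = r ++ q := by
    rw [List.drop_append]; simp
  have h2 : (List.replicate b true ++ (false :: (r ++ q))).drop (2 * b + 1 + e) = q := by
    have : 2 * b + 1 + e = (b + 1) + (b + e) := by omega
    rw [this, ← List.drop_drop, h1, ← hr]; simp
  rw [h1, h2, ← hr]
  simp

/-- there is a constant `d` such that for every `b`, every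
`A ∈ 2^ℕ` that is C-trivial via `b` is K-trivial via `2b + d`. -/
theorem C_trivial_implies_K_trivial_effectively
    (U UK : BStr →. BStr) (hU : UniversalPlain U) (hUK : UniversalPrefixFree UK)
    (hlenC : ∀ x : BStr, cpxN U x.length ≤ cpx U x)
    (hlenK : ∀ x : BStr, cpxN UK x.length ≤ cpx UK x) :
    ∃ d : ℕ, ∀ (b : ℕ) (A : Cantor),
      (∀ n : ℕ, cpx U (seg A n) ≤ cpxN U n + b) →
      (∀ n : ℕ, cpx UK (seg A n) ≤ cpxN UK n + 2 * b + d) := by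
  obtain ⟨e, f, hf, hcard, hmem⟩ := candidates hU
  obtain ⟨g, hg, hgs⟩ := enum_lemma f hf
  let M : BStr →. BStr := fun p => (Part.ofOption (parseProg e p)).bind
    fun z => (UK z.2.2).bind fun x => g (x.length, z.1) z.2.1
  have hM : Partrec M := by
    refine Partrec.bind (Computable.ofOption (primrec_parseProg e).to_comp) ?_
    refine Partrec.bind (hUK.1.comp (Computable.snd.comp (Computable.snd.comp Computable.snd))) ?_
    refine hg.comp ((Computable.list_length.comp Computable.snd).pair
      (Computable.fst.comp (Computable.snd.comp Computable.fst))) ?_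
    exact Computable.fst.comp (Computable.snd.comp (Computable.snd.comp Computable.fst))
  have hdom : ∀ p, (M p).Dom → ∃ z, parseProg e p = some z ∧ (UK z.2.2).Dom := by
    intro p hp
    obtain ⟨x, hx⟩ := Part.dom_iff_mem.1 hp
    obtain ⟨z, hz, hx⟩ := Part.mem_bind_iff.1 hx
    obtain ⟨y, hy, hx⟩ := Part.mem_bind_iff.1 hx
    exact ⟨z, by simpa using hz, Part.dom_iff_mem.2 ⟨y, hy⟩⟩
  have hpf : PrefixFreeDom M := by
    rintro p q hp hq ⟨s, rfl⟩
    obtain ⟨z, hz, hzU⟩ := hdom p hp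
    obtain ⟨w, hw, hwU⟩ := hdom _ hq
    obtain ⟨m, hm⟩ := parseProg_append (s := s) hz
    rw [hm] at hw
    cases hw
    have := hUK.2.1 _ _ hzU hwU (List.prefix_append _ _)
    have hs : s = [] := by simpa using this
    simp [hs]
  obtain ⟨k, hk⟩ := hUK.2.2 M hM hpf
  refine ⟨1 + e + k, fun b A hA n => ?_⟩
  obtain ⟨s, hs⟩ := hmem b A hA n
  obtain ⟨j, hj, hjm⟩ := hgs (n, b) _ (hcard n b) s _ hs
  obtain ⟨r, hr, hrv⟩ := bval_surj _ j hj
  obtain ⟨q0, hq0⟩ := prefix_total hUK (numStr n)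
  obtain ⟨q, hq, hqm⟩ := cpx_spec_of_mem hq0
  obtain ⟨y, hy, hym⟩ := hk (List.replicate b true ++ (false :: (r ++ q))) (seg A n) (by
    simp only [M]
    rw [parseProg_build e b r q hr]
    refine Part.mem_bind_iff.2 ⟨(b, bval r, q), by simp, Part.mem_bind_iff.2 ⟨numStr n, hqm, ?_⟩⟩
    simpa [numStr, hrv] using hjm)
  have h1 := cpx_le_of_mem hym
  have h2 : q.length = cpxN UK n := hq
  simp only [List.length_append, List.length_replicate, List.length_cons] at hy
  omega
end
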